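/- arXiv:2512.12351 — 7 statements merged into one kernel-verified Lean document; each statement's English description precedes it below -/
import Mathlib

section
/- Let N ≥ 1 be an integer, let Ω ⊆ ℝ^N be a nonempty open set, let p ∈ (1, +∞), and let μ be a nonnegative, nontrivial (i.e. μ ≠ 0), finite Borel measure on (0,1). Let u : ℝ^N → ℝ be measurable. If ∫_{(0,1)} ( c_{N,s,p} ∬_𝒬 |u(x) − u(y)|^p / |x−y|^{N+ps} dx dy ) dμ(s) = 0, then there exists a constant c ∈ ℝ such that u = c almost everywhere in ℝ^N. -/
open MeasureTheory Set
open scoped ENNReal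

/-- The normalizing constant `c_{N,s,p}` of the fractional `p`-Laplacian. -/
noncomputable def cNsp (N : ℕ) (s p : ℝ) : ℝ :=
  s * (2 : ℝ) ^ (2 * s - 1) * Real.Gamma ((p * s + p + N - 2) / 2) /
    (Real.pi ^ ((N : ℝ) / 2) * Real.Gamma (1 - s))

theorem statement3 (N : ℕ) (hN : 1 ≤ N)
    (Ω : Set (EuclideanSpace ℝ (Fin N))) (hΩ : IsOpen Ω) (hne : Ω.Nonempty)
    (p : ℝ) (hp : 1 < p)
    (μ : Measure ℝ) [IsFiniteMeasure μ] (hμ : μ ≠ 0)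
    (hsupp : μ ((Set.Ioo (0 : ℝ) 1)ᶜ) = 0)
    (u : EuclideanSpace ℝ (Fin N) → ℝ) (hu : Measurable u)
    (h : (∫⁻ s in Set.Ioo (0 : ℝ) 1,
        ENNReal.ofReal (cNsp N s p) *
          ∫⁻ z in ((Ωᶜ) ×ˢ (Ωᶜ))ᶜ,
            ENNReal.ofReal (|u z.1 - u z.2| ^ p / dist z.1 z.2 ^ ((N : ℝ) + p * s))
            ∂(volume.prod volume) ∂μ) = 0) :
    ∃ c : ℝ, ∀ᵐ x ∂(volume : Measure (EuclideanSpace ℝ (Fin N))), u x = c := by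
  have hcpos : ∀ s ∈ Set.Ioo (0 : ℝ) 1, 0 < cNsp N s p := by
    intro s hs
    have hN' : (1 : ℝ) ≤ N := by exact_mod_cast hN
    have h1 : 0 < (p * s + p + N - 2) / 2 := by nlinarith [mul_pos (by linarith : 0 < p) hs.1]
    have h2 : 0 < 1 - s := by linarith [hs.2]
    have := Real.Gamma_pos_of_pos h1
    have := Real.Gamma_pos_of_pos h2
    have := Real.pi_pos
    have := hs.1
    unfold cNsp
    positivity
  have hcont : ContinuousOn (fun s => cNsp N s p) (Set.Ioo (0 : ℝ) 1) := by
    intro s hs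
    apply ContinuousAt.continuousWithinAt
    have hN' : (1 : ℝ) ≤ N := by exact_mod_cast hN
    have h1 : 0 < (p * s + p + N - 2) / 2 := by nlinarith [mul_pos (by linarith : 0 < p) hs.1]
    have h2 : 0 < 1 - s := by linarith [hs.2]
    have g : ∀ x : ℝ, 0 < x → ContinuousAt Real.Gamma x := by
      intro x hx
      apply (Real.differentiableAt_Gamma _).continuousAt
      intro m hm
      have : (0 : ℝ) ≤ m := Nat.cast_nonneg m
      linarith
    have g1 : ContinuousAt (fun s : ℝ => Real.Gamma ((p * s + p + N - 2) / 2)) s :=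
      ContinuousAt.comp (f := fun s : ℝ => (p * s + p + N - 2) / 2) (g _ h1) (by fun_prop)
    have g2 : ContinuousAt (fun s : ℝ => Real.Gamma (1 - s)) s :=
      ContinuousAt.comp (f := fun s : ℝ => 1 - s) (g _ h2) (by fun_prop)
    have g3 : ContinuousAt (fun s : ℝ => (2 : ℝ) ^ (2 * s - 1)) s :=
      ContinuousAt.rpow continuousAt_const (by fun_prop) (Or.inl (by norm_num))
    have hG := Real.Gamma_pos_of_pos h2
    have hpi := Real.pi_pos
    unfold cNsp
    exact ((continuousAt_id.mul g3).mul g1).div (continuousAt_const.mul g2) (by positivity)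
  have hcm : AEMeasurable (fun s => ENNReal.ofReal (cNsp N s p))
      (μ.restrict (Set.Ioo (0 : ℝ) 1)) :=
    (hcont.aemeasurable measurableSet_Ioo).ennreal_ofReal
  have him : Measurable (fun s : ℝ => ∫⁻ z in ((Ωᶜ) ×ˢ (Ωᶜ))ᶜ,
      ENNReal.ofReal (|u z.1 - u z.2| ^ p / dist z.1 z.2 ^ ((N : ℝ) + p * s))
      ∂((volume : Measure (EuclideanSpace ℝ (Fin N))).prod volume)) := by
    apply Measurable.lintegral_prod_right'
      (f := fun w : ℝ × (EuclideanSpace ℝ (Fin N) × EuclideanSpace ℝ (Fin N)) =>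
        ENNReal.ofReal (|u w.2.1 - u w.2.2| ^ p / dist w.2.1 w.2.2 ^ ((N : ℝ) + p * w.1)))
    apply Measurable.ennreal_ofReal
    have hd : Measurable (fun w : ℝ × (EuclideanSpace ℝ (Fin N) × EuclideanSpace ℝ (Fin N)) =>
        u w.2.1 - u w.2.2) :=
      (hu.comp (measurable_fst.comp measurable_snd)).sub
        (hu.comp (measurable_snd.comp measurable_snd))
    have hd2 : Measurable (fun w : ℝ × (EuclideanSpace ℝ (Fin N) × EuclideanSpace ℝ (Fin N)) =>
        |u w.2.1 - u w.2.2|) := continuous_abs.measurable.comp hd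
    exact (hd2.pow_const p).div
      (Measurable.pow (by fun_prop) (by fun_prop))
  replace h := (lintegral_eq_zero_iff' (hcm.mul him.aemeasurable)).1 h
  have hr : μ.restrict (Set.Ioo (0 : ℝ) 1) ≠ 0 := by
    intro h0
    rw [Measure.restrict_eq_zero] at h0
    apply hμ
    rw [← Measure.measure_univ_eq_zero, ← Set.union_compl_self (Set.Ioo (0 : ℝ) 1)]
    exact measure_union_null h0 hsupp
  haveI : (ae (μ.restrict (Set.Ioo (0 : ℝ) 1))).NeBot := ae_neBot.2 hr
  obtain ⟨s, hs, hsI⟩ := (h.and (ae_restrict_mem measurableSet_Ioo)).exists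
  have hint := (mul_eq_zero.1 hs).resolve_left
    (by simpa using hcpos s hsI)
  have hzm : Measurable (fun z : EuclideanSpace ℝ (Fin N) × EuclideanSpace ℝ (Fin N) =>
      ENNReal.ofReal (|u z.1 - u z.2| ^ p / dist z.1 z.2 ^ ((N : ℝ) + p * s))) := by
    apply Measurable.ennreal_ofReal
    have hd : Measurable (fun z : EuclideanSpace ℝ (Fin N) × EuclideanSpace ℝ (Fin N) =>
        |u z.1 - u z.2|) :=
      continuous_abs.measurable.comp ((hu.comp measurable_fst).sub (hu.comp measurable_snd))
    exact (hd.pow_const p).div (Measurable.pow_const (by fun_prop) _)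
  have hΩm := hΩ.measurableSet
  rw [lintegral_eq_zero_iff hzm, Filter.EventuallyEq,
    ae_restrict_iff' (hΩm.compl.prod hΩm.compl).compl] at hint
  have hae := Measure.ae_ae_of_ae_prod hint
  have hpos : volume.restrict Ω ≠ 0 := by
    rw [Ne, Measure.restrict_eq_zero]
    exact (hΩ.measure_pos volume hne).ne'
  haveI : (ae ((volume : Measure (EuclideanSpace ℝ (Fin N))).restrict Ω)).NeBot := ae_neBot.2 hpos
  obtain ⟨x, hx, hxΩ⟩ := ((ae_restrict_of_ae hae).and (ae_restrict_mem hΩm)).exists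
  refine ⟨u x, ?_⟩
  filter_upwards [hx] with y hy
  have hy' := hy (by simp [hxΩ])
  by_contra hne'
  have hxy : x ≠ y := by
    rintro rfl
    exact hne' rfl
  have ha : 0 < |u x - u y| := abs_pos.2 (sub_ne_zero.2 (Ne.symm hne'))
  have hdist : 0 < dist x y := dist_pos.2 hxy
  have hq : 0 < |u x - u y| ^ p / dist x y ^ ((N : ℝ) + p * s) := by positivity
  have hz := ENNReal.ofReal_eq_zero.1 hy'
  exact absurd hz (not_le.2 hq)
end

section
/- Let N ≥ 1 be an integer, let Ω ⊆ ℝ^N be a nonempty bounded open set, let p ∈ (1, +∞), let μ be a nonnegative, nontrivial (i.e. μ ≠ 0), finite Borel measure on (0,1), and let g : ℝ^N → ℝ be measurable. For a measurable function v : ℝ^N → ℝ set E(v) := ∫_Ω |v|^p dx + ∫_{ℝ^N ∖ Ω} |g| · |v|^p dx + (1/2) ∫_{(0,1)} ( c_{N,s,p} ∬_𝒬 |v(x) − v(y)|^p / |x−y|^{N+ps} dx dy ) dμ(s). Suppose {u_n} is a sequence of measurable functions u_n : ℝ^N → ℝ with E(u_n) < +∞ for every n, which is Cauchy for E, i.e.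 for every ε > 0 there exists K such that E(u_m − u_n) ≤ ε for all m, n ≥ K. Then there exist a subsequence {u_{n_k}} and a measurable function u : ℝ^N → ℝ such that u_{n_k}(x) → u(x) for almost every x ∈ ℝ^N. -/
open MeasureTheory Set Filter
open scoped ENNReal Topology

/-- The energy `E(v)` built from the `L^p` norm on `Ω`, the weighted `L^p` norm on `ℝ^N ∖ Ω`
and the superposition of Gagliardo seminorms over `𝒬 = ℝ^{2N} ∖ (Ωᶜ × Ωᶜ)`. -/
noncomputable def energyE (N : ℕ) (Ω : Set (EuclideanSpace ℝ (Fin N))) (p : ℝ)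
    (μ : Measure ℝ) (g v : EuclideanSpace ℝ (Fin N) → ℝ) : ℝ≥0∞ :=
  (∫⁻ x in Ω, ENNReal.ofReal (|v x| ^ p)) +
    (∫⁻ x in Ωᶜ, ENNReal.ofReal (|g x| * |v x| ^ p)) +
    (1 / 2) * ∫⁻ s in Set.Ioo (0 : ℝ) 1,
        ENNReal.ofReal (cNsp N s p) *
          ∫⁻ z in ((Ωᶜ) ×ˢ (Ωᶜ))ᶜ,
            ENNReal.ofReal (|v z.1 - v z.2| ^ p / dist z.1 z.2 ^ ((N : ℝ) + p * s))
            ∂(volume.prod volume) ∂μ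

lemma aux_summable {α : Type*} [MeasurableSpace α] (ν : Measure α) (d : ℕ → α → ℝ)
    (W : α → ℝ) (p : ℝ) (hp : 1 < p) (hd : ∀ k, Measurable (d k)) (hW : Measurable W)
    (hWpos : ∀ x, 0 < W x) (K : ℝ≥0∞) (hK : K ≠ ⊤)
    (h : ∀ k, ∫⁻ x, ENNReal.ofReal (|d k x| ^ p / W x) ∂ν
      ≤ ENNReal.ofReal ((1 / 2) ^ k / ((2 : ℝ) ^ k) ^ p) * K) :
    ∀ᵐ x ∂ν, Summable (fun k => d k x) := by
  have hm : ∀ k, Measurable (fun x => ENNReal.ofReal (((2 : ℝ) ^ k) ^ p) *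
      ENNReal.ofReal (|d k x| ^ p / W x)) := by
    intro k
    have := hd k
    fun_prop
  have hfin : ∫⁻ x, ∑' k, ENNReal.ofReal (((2 : ℝ) ^ k) ^ p) *
      ENNReal.ofReal (|d k x| ^ p / W x) ∂ν ≠ ⊤ := by
    rw [lintegral_tsum (fun k => (hm k).aemeasurable)]
    have hle : ∀ k, ∫⁻ x, ENNReal.ofReal (((2 : ℝ) ^ k) ^ p) *
      ENNReal.ofReal (|d k x| ^ p / W x) ∂ν ≤ ENNReal.ofReal ((1 / 2) ^ k) * K := by
      intro k
      rw [lintegral_const_mul' _ _ ENNReal.ofReal_ne_top]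
      calc _ ≤ ENNReal.ofReal (((2 : ℝ) ^ k) ^ p) *
          (ENNReal.ofReal ((1 / 2) ^ k / ((2 : ℝ) ^ k) ^ p) * K) := by gcongr; exact h k
        _ = ENNReal.ofReal ((1 / 2) ^ k) * K := by
          rw [← mul_assoc, ← ENNReal.ofReal_mul (by positivity)]
          congr 2
          have : ((2 : ℝ) ^ k) ^ p ≠ 0 := by positivity
          field_simp
    refine ne_top_of_le_ne_top ?_ (ENNReal.tsum_le_tsum hle)
    rw [ENNReal.tsum_mul_right]
    refine ENNReal.mul_ne_top ?_ hK
    have hs : Summable (fun k : ℕ => ((1 : ℝ) / 2) ^ k) := summable_geometric_two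
    rw [← ENNReal.ofReal_tsum_of_nonneg (fun k => by positivity) hs]
    exact ENNReal.ofReal_ne_top
  have hae := ae_lt_top (Measurable.tsum hm) hfin
  filter_upwards [hae] with x hx
  have ht := ENNReal.tendsto_atTop_zero_of_tsum_ne_top hx.ne
  have hev := ht.eventually (gt_mem_nhds (zero_lt_one))
  have hs : Summable (fun k : ℕ => (W x) ^ (1 / p) * ((1 : ℝ) / 2) ^ k) :=
    summable_geometric_two.mul_left _
  refine hs.of_norm_bounded_eventually_nat ?_
  filter_upwards [hev] with k hk
  rw [← ENNReal.ofReal_mul (by positivity), ENNReal.ofReal_lt_one] at hk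
  have hWx := hWpos x
  have h1 : ((2 : ℝ) ^ k * |d k x|) ^ p ≤ W x := by
    rw [Real.mul_rpow (by positivity) (by positivity)]
    rw [← mul_div_assoc, div_lt_one hWx] at hk
    exact hk.le
  have h2 : (2 : ℝ) ^ k * |d k x| ≤ W x ^ (1 / p) := by
    have := Real.rpow_le_rpow (by positivity) h1 (show (0 : ℝ) ≤ 1 / p by positivity)
    rwa [← Real.rpow_mul (by positivity), mul_one_div_cancel (by linarith), Real.rpow_one] at this
  rw [Real.norm_eq_abs, one_div_pow, mul_one_div, le_div_iff₀ (by positivity)]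
  linarith

lemma aux_const (N : ℕ) (hN : 1 ≤ N) (p : ℝ) (hp : 1 < p) (μ : Measure ℝ) (hμ : μ ≠ 0)
    (hsupp : μ ((Set.Ioo (0 : ℝ) 1)ᶜ) = 0) :
    ∫⁻ s in Set.Ioo (0 : ℝ) 1, ENNReal.ofReal (cNsp N s p) ∂μ ≠ 0 := by
  have hN' : (1 : ℝ) ≤ N := by exact_mod_cast hN
  have hA : ∀ s ∈ Set.Ioo (0 : ℝ) 1, 0 < (p * s + p + N - 2) / 2 := by
    intro s hs
    have : 0 < p * s := mul_pos (by linarith) hs.1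
    linarith
  have hpos : ∀ s ∈ Set.Ioo (0 : ℝ) 1, 0 < cNsp N s p := by
    intro s hs
    have h1 := Real.Gamma_pos_of_pos (hA s hs)
    have h2 := Real.Gamma_pos_of_pos (show 0 < 1 - s by linarith [hs.2])
    have h3 := hs.1
    unfold cNsp
    positivity
  have hG : ∀ t : ℝ, 0 < t → ContinuousAt Real.Gamma t := fun t ht =>
    (Real.differentiableAt_Gamma (fun m => by
      have : (0 : ℝ) ≤ m := m.cast_nonneg
      linarith)).continuousAt
  have hcont : ContinuousOn (fun s => cNsp N s p) (Set.Ioo (0 : ℝ) 1) := by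
    intro s hs
    apply ContinuousAt.continuousWithinAt
    have h2 := Real.Gamma_pos_of_pos (show 0 < 1 - s by linarith [hs.2])
    have c1 : ContinuousAt (fun s : ℝ => Real.Gamma ((p * s + p + N - 2) / 2)) s :=
      ContinuousAt.comp' (hG _ (hA s hs)) (by fun_prop)
    have c2 : ContinuousAt (fun s : ℝ => Real.Gamma (1 - s)) s :=
      ContinuousAt.comp' (hG _ (by linarith [hs.2])) (by fun_prop)
    have c3 : ContinuousAt (fun s : ℝ => (2 : ℝ) ^ (2 * s - 1)) s :=
      (Real.continuousAt_const_rpow (by norm_num)).comp' (by fun_prop)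
    unfold cNsp
    exact ((continuousAt_id.mul c3).mul c1).div (continuousAt_const.mul c2) (by positivity)
  have hmeas : AEMeasurable (fun s => cNsp N s p) (μ.restrict (Set.Ioo 0 1)) :=
    hcont.aemeasurable measurableSet_Ioo
  intro h0
  rw [lintegral_eq_zero_iff' hmeas.ennreal_ofReal] at h0
  have h1 := (ae_restrict_iff' measurableSet_Ioo).1 h0
  apply hμ
  rw [← Measure.measure_univ_eq_zero, ← Set.union_compl_self (Set.Ioo (0 : ℝ) 1)]
  refine measure_union_null ?_ hsupp
  refine measure_mono_null ?_ h1
  intro s hs h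
  have := h hs
  simp only [Pi.zero_apply, ENNReal.ofReal_eq_zero] at this
  exact absurd (hpos s hs) (not_lt.2 this)

lemma aux_energy (N : ℕ) (Ω : Set (EuclideanSpace ℝ (Fin N))) (hΩ : IsOpen Ω)
    (p : ℝ) (hp : 1 < p) (μ : Measure ℝ) (g v : EuclideanSpace ℝ (Fin N) → ℝ) :
    (∫⁻ z, ENNReal.ofReal (|v z.1 - v z.2| ^ p / (max 1 (dist z.1 z.2)) ^ ((N : ℝ) + p))
      ∂((volume.restrict Ω).prod volume)) *
      ((1 / 2) * ∫⁻ s in Set.Ioo (0 : ℝ) 1, ENNReal.ofReal (cNsp N s p) ∂μ)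
      ≤ energyE N Ω p μ g v := by
  unfold energyE
  refine le_trans ?_ le_add_self
  rw [mul_left_comm]
  gcongr
  rw [mul_comm]
  refine (lintegral_mul_const_le _ _).trans ?_
  refine setLIntegral_mono' measurableSet_Ioo ?_
  intro s hs
  refine mul_le_mul' le_rfl ?_
  have e : (volume.restrict Ω).prod (volume : Measure (EuclideanSpace ℝ (Fin N))) =
      (volume.prod volume).restrict (Ω ×ˢ univ) := by
    rw [← Measure.prod_restrict, Measure.restrict_univ]
  rw [e]
  refine (lintegral_mono ?_).trans (lintegral_mono_set (s := Ω ×ˢ univ) ?_)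
  · rintro ⟨x, y⟩
    apply ENNReal.ofReal_le_ofReal
    simp only
    rcases eq_or_ne x y with rfl | hxy
    · simp [Real.zero_rpow (show p ≠ 0 by linarith)]
    · have hd : 0 < dist x y := dist_pos.2 hxy
      have hN0 : (0 : ℝ) ≤ N := N.cast_nonneg
      have hps : p * s ≤ p := by nlinarith [hs.2]
      have hps0 : 0 < p * s := mul_pos (by linarith) hs.1
      apply div_le_div_of_nonneg_left (by positivity) (by positivity)
      calc dist x y ^ ((N : ℝ) + p * s) ≤ (max 1 (dist x y)) ^ ((N : ℝ) + p * s) :=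
            Real.rpow_le_rpow hd.le (le_max_right _ _) (by positivity)
        _ ≤ _ := Real.rpow_le_rpow_of_exponent_le (le_max_left _ _) (by linarith)
  · rintro ⟨x, y⟩ h h'
    exact h'.1 h.1

lemma aux_pair (N : ℕ) (Ω : Set (EuclideanSpace ℝ (Fin N))) (hΩ : IsOpen Ω)
    (p : ℝ) (hp : 1 < p) (μ : Measure ℝ) (g : EuclideanSpace ℝ (Fin N) → ℝ)
    (d : ℕ → EuclideanSpace ℝ (Fin N) → ℝ) (hdm : ∀ k, Measurable (d k)) (C : ℝ≥0∞)
    (hC : C = (1 / 2) * ∫⁻ s in Set.Ioo (0 : ℝ) 1, ENNReal.ofReal (cNsp N s p) ∂μ)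
    (hC0 : C ≠ 0)
    (hE : ∀ k, energyE N Ω p μ g (d k) ≤ ENNReal.ofReal ((1 / 2) ^ k / ((2 : ℝ) ^ k) ^ p)) :
    ∀ᵐ z ∂((volume.restrict Ω).prod (volume : Measure (EuclideanSpace ℝ (Fin N)))),
      Summable (fun k => d k z.1 - d k z.2) := by
  have m1 : ∀ k, Measurable (fun z : EuclideanSpace ℝ (Fin N) × EuclideanSpace ℝ (Fin N) =>
      d k z.1 - d k z.2) := fun k =>
    ((hdm k).comp measurable_fst).sub ((hdm k).comp measurable_snd)
  have m2 : Measurable (fun z : EuclideanSpace ℝ (Fin N) × EuclideanSpace ℝ (Fin N) =>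
      (max 1 (dist z.1 z.2)) ^ ((N : ℝ) + p)) :=
    (measurable_const.max (measurable_fst.dist measurable_snd)).pow_const _
  have m3 : ∀ z : EuclideanSpace ℝ (Fin N) × EuclideanSpace ℝ (Fin N),
      0 < (max 1 (dist z.1 z.2)) ^ ((N : ℝ) + p) := fun z =>
    Real.rpow_pos_of_pos (lt_max_of_lt_left one_pos) _
  have hK : C⁻¹ ≠ ⊤ := ENNReal.inv_ne_top.2 hC0
  have m4 : ∀ k, ∫⁻ z, ENNReal.ofReal
      (|d k z.1 - d k z.2| ^ p / (max 1 (dist z.1 z.2)) ^ ((N : ℝ) + p))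
      ∂((volume.restrict Ω).prod (volume : Measure (EuclideanSpace ℝ (Fin N))))
      ≤ ENNReal.ofReal ((1 / 2) ^ k / ((2 : ℝ) ^ k) ^ p) * C⁻¹ := by
    intro k
    have := (aux_energy N Ω hΩ p hp μ g (d k)).trans (hE k)
    rw [← hC] at this
    rw [← div_eq_mul_inv]
    exact (ENNReal.le_div_iff_mul_le (Or.inl hC0) (Or.inr ENNReal.ofReal_ne_top)).2 this
  exact aux_summable ((volume.restrict Ω).prod volume) (fun k z => d k z.1 - d k z.2)
      (fun z => (max 1 (dist z.1 z.2)) ^ ((N : ℝ) + p)) p hp m1 m2 m3 C⁻¹ hK m4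

theorem statement4 (N : ℕ) (hN : 1 ≤ N)
    (Ω : Set (EuclideanSpace ℝ (Fin N))) (hΩ : IsOpen Ω) (hne : Ω.Nonempty)
    (hbd : Bornology.IsBounded Ω)
    (p : ℝ) (hp : 1 < p)
    (μ : Measure ℝ) [IsFiniteMeasure μ] (hμ : μ ≠ 0)
    (hsupp : μ ((Set.Ioo (0 : ℝ) 1)ᶜ) = 0)
    (g : EuclideanSpace ℝ (Fin N) → ℝ) (hg : Measurable g)
    (u : ℕ → EuclideanSpace ℝ (Fin N) → ℝ) (hu : ∀ n, Measurable (u n))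
    (hfin : ∀ n, energyE N Ω p μ g (u n) < ⊤)
    (hcauchy : ∀ ε : ℝ, 0 < ε → ∃ K : ℕ, ∀ m, K ≤ m → ∀ n, K ≤ n →
      energyE N Ω p μ g (fun x => u m x - u n x) ≤ ENNReal.ofReal ε) :
    ∃ φ : ℕ → ℕ, StrictMono φ ∧
      ∃ v : EuclideanSpace ℝ (Fin N) → ℝ, Measurable v ∧
        ∀ᵐ x ∂(volume : Measure (EuclideanSpace ℝ (Fin N))),
          Tendsto (fun k => u (φ k) x) atTop (𝓝 (v x)) := by
  set C : ℝ≥0∞ := (1 / 2) * ∫⁻ s in Set.Ioo (0 : ℝ) 1, ENNReal.ofReal (cNsp N s p) ∂μ with hC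
  have hC0 : C ≠ 0 := mul_ne_zero (by simp) (aux_const N hN p hp μ hμ hsupp)
  have hev : ∀ k : ℕ, ∀ᶠ K in atTop, ∀ m, K ≤ m → ∀ n, K ≤ n →
      energyE N Ω p μ g (fun x => u m x - u n x) ≤
        ENNReal.ofReal ((1 / 2) ^ k / ((2 : ℝ) ^ k) ^ p) := by
    intro k
    obtain ⟨K, hK⟩ := hcauchy ((1 / 2) ^ k / ((2 : ℝ) ^ k) ^ p) (by positivity)
    filter_upwards [eventually_ge_atTop K] with L hL m hm n hn
    exact hK m (hL.trans hm) n (hL.trans hn)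
  obtain ⟨φ, hφ, hφE⟩ := extraction_forall_of_eventually hev
  refine ⟨φ, hφ, ?_⟩
  have hE : ∀ k, energyE N Ω p μ g (fun x => u (φ (k + 1)) x - u (φ k) x) ≤
        ENNReal.ofReal ((1 / 2) ^ k / ((2 : ℝ) ^ k) ^ p) := fun k =>
    hφE k _ (hφ (Nat.lt_succ_self k)).le _ le_rfl
  set d : ℕ → EuclideanSpace ℝ (Fin N) → ℝ := fun k x => u (φ (k + 1)) x - u (φ k) x with hd
  have hdm : ∀ k, Measurable (d k) := fun k => (hu _).sub (hu _)
  have h1 : ∀ᵐ x ∂(volume.restrict Ω), Summable (fun k => d k x) := by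
    refine aux_summable _ d (fun _ => 1) p hp hdm measurable_const (fun _ => one_pos) 1 (by simp) ?_
    intro k
    simp only [div_one, mul_one]
    refine le_trans ?_ (hE k)
    unfold energyE
    rw [add_assoc]
    exact le_self_add
  have h2 : ∀ᵐ z ∂((volume.restrict Ω).prod (volume : Measure (EuclideanSpace ℝ (Fin N)))),
      Summable (fun k => d k z.1 - d k z.2) :=
    aux_pair N Ω hΩ p hp μ g d hdm C hC hC0 hE
  have h3 := Measure.ae_ae_of_ae_prod h2
  have hvol : volume.restrict Ω ≠ 0 := by
    rw [Ne, Measure.restrict_eq_zero]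
    exact (hΩ.measure_pos volume hne).ne'
  haveI : NeBot (ae (volume.restrict Ω)) := ae_neBot.2 hvol
  obtain ⟨x0, hx0, hx0'⟩ := (h1.and h3).exists
  have h4 : ∀ᵐ x ∂(volume : Measure (EuclideanSpace ℝ (Fin N))),
      ∃ l, Tendsto (fun k => u (φ k) x) atTop (𝓝 l) := by
    filter_upwards [hx0'] with y hy
    have hs : Summable (fun k => d k y) := by
      have := hx0.sub hy
      simpa using this
    have ht := hs.hasSum.tendsto_sum_nat
    refine ⟨u (φ 0) y + ∑' k, d k y, ?_⟩
    have := ht.const_add (u (φ 0) y)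
    refine this.congr ?_
    intro n
    have := Finset.sum_range_sub (fun k => u (φ k) y) n
    simp only [hd, this]
    ring
  obtain ⟨f, hf, hft⟩ := measurable_limit_of_tendsto_metrizable_ae
    (fun n => (hu (φ n)).aemeasurable) h4
  exact ⟨f, hf, hft⟩
end

section
/- Let N ≥ 1 be an integer, let Ω ⊆ ℝ^N be a nonempty bounded open set, let p ∈ (1, +∞), let μ be a nonnegative, nontrivial (i.e. μ ≠ 0), finite Borel measure on (0,1), and let g : ℝ^N → ℝ be measurable. For a measurable function v : ℝ^N → ℝ set E(v) := ∫_Ω |v|^p dx + ∫_{ℝ^N ∖ Ω} |g| · |v|^p dx + (1/2) ∫_{(0,1)} ( c_{N,s,p} ∬_𝒬 |v(x) − v(y)|^p / |x−y|^{N+ps} dx dy ) dμ(s). Suppose {u_n} is a sequence of measurable functions u_n : ℝ^N → ℝ with E(u_n) < +∞ for every n, which is Cauchy for E, i.e. for every ε > 0 there exists K such that E(u_m − u_n) ≤ ε for all m, n ≥ K. Then there exists a measurable function u : ℝ^N → ℝ with E(u) < +∞ such that E(u_n − u) → 0 as n → ∞. -/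
open MeasureTheory Set Filter
open scoped ENNReal Topology

/-- The `p`-th power integral of a real function. -/
noncomputable def pInt {α : Type*} [MeasurableSpace α] (ν : Measure α) (p : ℝ) (f : α → ℝ) : ℝ≥0∞ :=
  ∫⁻ x, ENNReal.ofReal (|f x| ^ p) ∂ν

lemma pInt_ae_conv {α : Type*} [MeasurableSpace α] (ν : Measure α) (p : ℝ) (hp : 1 < p)
    (f : ℕ → α → ℝ) (hf : ∀ n, Measurable (f n))
    (h : ∀ k m n, k ≤ m → k ≤ n →
      pInt ν p (fun x => f m x - f n x) ≤ ENNReal.ofReal (((1 / 2 : ℝ) ^ k) ^ p)) :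
    ∀ᵐ x ∂ν, ∃ l : ℝ, Tendsto (fun n => f n x) atTop (𝓝 l) := by
  have hp0 : 0 < p := by linarith
  have hB : ∑' k : ℕ, (2 * (2⁻¹ : ℝ≥0∞) ^ k) ≠ ⊤ := by
    rw [ENNReal.tsum_mul_left, ENNReal.tsum_geometric, ENNReal.one_sub_inv_two, inv_inv]
    exact ENNReal.mul_ne_top (by simp) (by simp)
  refine Lp.ae_tendsto_of_cauchy_eLpNorm' (p := p) (fun n => (hf n).aestronglyMeasurable) hp.le hB ?_
  intro k m n hm hn
  have h1 : eLpNorm' (f m - f n) p ν ≤ (2⁻¹ : ℝ≥0∞) ^ k := by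
    have h2 := h k m n hm hn
    have h3 : ENNReal.ofReal (((1 / 2 : ℝ) ^ k) ^ p) = ((2⁻¹ : ℝ≥0∞) ^ k) ^ p := by
      rw [← ENNReal.ofReal_rpow_of_nonneg (by positivity) hp0.le, ENNReal.ofReal_pow (by positivity),
        one_div, ENNReal.ofReal_inv_of_pos (by norm_num)]
      norm_num
    rw [h3] at h2
    have h4 : pInt ν p (fun x => f m x - f n x) = ∫⁻ x, ‖(f m - f n) x‖ₑ ^ p ∂ν := by
      unfold pInt
      refine lintegral_congr fun x => ?_
      rw [← ENNReal.ofReal_rpow_of_nonneg (abs_nonneg _) hp0.le, Real.enorm_eq_ofReal_abs]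
      rfl
    rw [h4] at h2
    rw [eLpNorm'_eq_lintegral_enorm]
    calc _ ≤ (((2⁻¹ : ℝ≥0∞) ^ k) ^ p) ^ (1 / p) := by gcongr
      _ = _ := by
        rw [← ENNReal.rpow_mul, mul_one_div_cancel hp0.ne', ENNReal.rpow_one]
  refine h1.trans_lt ?_
  have h5 : (2⁻¹ : ℝ≥0∞) ^ k ≠ 0 := pow_ne_zero _ (by simp)
  have h6 : (2⁻¹ : ℝ≥0∞) ^ k ≠ ⊤ := ENNReal.pow_ne_top (by simp)
  rw [two_mul]
  exact ENNReal.lt_add_right h6 h5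

lemma pInt_fatou {α : Type*} [MeasurableSpace α] (ν : Measure α) (p : ℝ) (hp : 1 < p)
    (f : ℕ → α → ℝ) (hf : ∀ n, Measurable (f n)) (g : α → ℝ)
    (hfg : ∀ᵐ x ∂ν, Tendsto (fun n => f n x) atTop (𝓝 (g x))) (ε : ℝ≥0∞)
    (h : ∀ᶠ n in atTop, pInt ν p (f n) ≤ ε) : pInt ν p g ≤ ε := by
  have hp0 : 0 < p := by linarith
  have h1 : pInt ν p g = ∫⁻ x, liminf (fun n => ENNReal.ofReal (|f n x| ^ p)) atTop ∂ν := by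
    refine lintegral_congr_ae ?_
    filter_upwards [hfg] with x hx
    refine (Tendsto.liminf_eq ?_).symm
    exact ENNReal.tendsto_ofReal ((hx.abs).rpow_const (Or.inr hp0.le))
  rw [h1]
  refine (lintegral_liminf_le' fun n => ?_).trans ?_
  · have := hf n
    fun_prop
  · exact liminf_le_of_frequently_le' h.frequently

lemma pInt_sub_lt_top {α : Type*} [MeasurableSpace α] (ν : Measure α) (p : ℝ) (hp : 1 < p)
    (f g : α → ℝ) (hf : Measurable f) (h1 : pInt ν p f < ⊤) (h2 : pInt ν p g < ⊤) :
    pInt ν p (fun x => f x - g x) < ⊤ := by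
  have hp0 : 0 < p := by linarith
  have h3 : pInt ν p (fun x => f x - g x) ≤
      ∫⁻ x, ENNReal.ofReal (2 ^ p) * (ENNReal.ofReal (|f x| ^ p) + ENNReal.ofReal (|g x| ^ p)) ∂ν := by
    refine lintegral_mono fun x => ?_
    rw [← ENNReal.ofReal_add (by positivity) (by positivity), ← ENNReal.ofReal_mul (by positivity)]
    refine ENNReal.ofReal_le_ofReal ?_
    have hm : |f x - g x| ≤ 2 * max |f x| |g x| := by
      have := abs_sub (f x) (g x)
      have := le_max_left |f x| |g x|
      have := le_max_right |f x| |g x|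
      linarith
    calc |f x - g x| ^ p ≤ (2 * max |f x| |g x|) ^ p := Real.rpow_le_rpow (abs_nonneg _) hm hp0.le
      _ = 2 ^ p * (max |f x| |g x|) ^ p := Real.mul_rpow (by norm_num) (by positivity)
      _ ≤ _ := by
        gcongr
        have a1 : 0 ≤ |f x| ^ p := by positivity
        have a2 : 0 ≤ |g x| ^ p := by positivity
        rcases max_choice |f x| |g x| with h | h <;> rw [h] <;> linarith
  refine h3.trans_lt ?_
  rw [lintegral_const_mul' _ _ ENNReal.ofReal_ne_top, lintegral_add_left (by fun_prop)]
  exact ENNReal.mul_lt_top ENNReal.ofReal_lt_top (ENNReal.add_lt_top.2 ⟨h1, h2⟩)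

lemma cNsp_pos (N : ℕ) (hN : 1 ≤ N) (s p : ℝ) (hp : 1 < p) (hs : s ∈ Set.Ioo (0 : ℝ) 1) :
    0 < cNsp N s p := by
  obtain ⟨h0, h1⟩ := hs
  have hN' : (1 : ℝ) ≤ N := by exact_mod_cast hN
  have : 0 < p * s := by positivity
  have a := Real.Gamma_pos_of_pos (s := (p * s + p + N - 2) / 2) (by linarith)
  have b := Real.Gamma_pos_of_pos (s := 1 - s) (by linarith)
  unfold cNsp
  positivity

lemma cNsp_cont (N : ℕ) (hN : 1 ≤ N) (p : ℝ) (hp : 1 < p) :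
    ContinuousOn (fun s => cNsp N s p) (Set.Ioo (0 : ℝ) 1) := by
  intro s hs
  obtain ⟨h0, h1⟩ := hs
  have hN' : (1 : ℝ) ≤ N := by exact_mod_cast hN
  have : 0 < p * s := by positivity
  have key : ∀ x : ℝ, 0 < x → ContinuousAt Real.Gamma x := fun x hx =>
    (Real.differentiableAt_Gamma fun m => by
      have : (0 : ℝ) ≤ m := by positivity
      linarith).continuousAt
  have a : ContinuousAt (fun s : ℝ => Real.Gamma ((p * s + p + N - 2) / 2)) s :=
    ContinuousAt.comp (f := fun s : ℝ => (p * s + p + N - 2) / 2) (g := Real.Gamma) (key _ (by linarith)) (by fun_prop)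
  have b : ContinuousAt (fun s : ℝ => Real.Gamma (1 - s)) s :=
    ContinuousAt.comp (f := fun s : ℝ => 1 - s) (g := Real.Gamma) (key _ (by linarith)) (by fun_prop)
  have b' := Real.Gamma_pos_of_pos (s := 1 - s) (by linarith)
  have c : ContinuousAt (fun s : ℝ => (2 : ℝ) ^ (2 * s - 1)) s :=
    ContinuousAt.rpow continuousAt_const (by fun_prop) (Or.inl (by norm_num))
  unfold cNsp
  refine ContinuousAt.continuousWithinAt ?_
  refine ContinuousAt.div ((continuousAt_id.mul c).mul a) (continuousAt_const.mul b) ?_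
  positivity

/-- The base product measure for the Gagliardo part. -/
noncomputable def baseM (N : ℕ) (Ω : Set (EuclideanSpace ℝ (Fin N))) (μ : Measure ℝ) :
    Measure (ℝ × (EuclideanSpace ℝ (Fin N) × EuclideanSpace ℝ (Fin N))) :=
  (μ.restrict (Set.Ioo (0 : ℝ) 1)).prod
    (((volume : Measure (EuclideanSpace ℝ (Fin N))).prod volume).restrict ((Ωᶜ) ×ˢ (Ωᶜ))ᶜ)

/-- The weight for the Gagliardo part. -/
noncomputable def wt (N : ℕ) (p : ℝ)
    (q : ℝ × (EuclideanSpace ℝ (Fin N) × EuclideanSpace ℝ (Fin N))) : ℝ≥0∞ :=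
  (1 / 2) * (ENNReal.ofReal (cNsp N q.1 p) *
    ENNReal.ofReal (dist q.2.1 q.2.2 ^ ((N : ℝ) + p * q.1))⁻¹)

lemma wt_aemeas (N : ℕ) (hN : 1 ≤ N) (Ω : Set (EuclideanSpace ℝ (Fin N))) (μ : Measure ℝ)
    [IsFiniteMeasure μ] (p : ℝ) (hp : 1 < p) : AEMeasurable (wt N p) (baseM N Ω μ) := by
  have h1 : AEMeasurable (fun s => cNsp N s p) (μ.restrict (Set.Ioo (0 : ℝ) 1)) :=
    (cNsp_cont N hN p hp).aemeasurable measurableSet_Ioo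
  have h2 : AEMeasurable (fun q : ℝ × (EuclideanSpace ℝ (Fin N) × EuclideanSpace ℝ (Fin N)) =>
      cNsp N q.1 p) (baseM N Ω μ) := by
    unfold baseM
    exact h1.comp_fst
  have h3 : Measurable (fun q : ℝ × (EuclideanSpace ℝ (Fin N) × EuclideanSpace ℝ (Fin N)) =>
      ENNReal.ofReal (dist q.2.1 q.2.2 ^ ((N : ℝ) + p * q.1))⁻¹) := by
    have : Measurable (fun q : ℝ × (EuclideanSpace ℝ (Fin N) × EuclideanSpace ℝ (Fin N)) =>
      dist q.2.1 q.2.2) := by fun_prop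
    fun_prop
  exact (h2.ennreal_ofReal.mul h3.aemeasurable).const_mul _

lemma energyE_eq (N : ℕ) (hN : 1 ≤ N) (Ω : Set (EuclideanSpace ℝ (Fin N))) (p : ℝ) (hp : 1 < p)
    (μ : Measure ℝ) [IsFiniteMeasure μ] (g v : EuclideanSpace ℝ (Fin N) → ℝ) (hg : Measurable g)
    (hv : Measurable v) :
    energyE N Ω p μ g v = pInt (volume.restrict Ω) p v +
      pInt ((volume.restrict Ωᶜ).withDensity (fun x => ENNReal.ofReal |g x|)) p v +
      pInt ((baseM N Ω μ).withDensity (wt N p)) p (fun q => v q.2.1 - v q.2.2) := by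
  have hw := wt_aemeas N hN Ω μ p hp
  unfold energyE
  congr 1
  · congr 1
    unfold pInt
    rw [lintegral_withDensity_eq_lintegral_mul₀ (by fun_prop) (by fun_prop)]
    refine lintegral_congr fun x => ?_
    rw [Pi.mul_apply, ENNReal.ofReal_mul (abs_nonneg _)]
  · unfold pInt
    have hm : Measurable (fun q : ℝ × (EuclideanSpace ℝ (Fin N) × EuclideanSpace ℝ (Fin N)) =>
        ENNReal.ofReal (|v q.2.1 - v q.2.2| ^ p)) := by fun_prop
    rw [lintegral_withDensity_eq_lintegral_mul₀ hw hm.aemeasurable]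
    have hwm := hw.mul hm.aemeasurable
    unfold baseM at hwm ⊢
    rw [lintegral_prod _ hwm, ← lintegral_const_mul' _ _ (by simp)]
    refine lintegral_congr fun s => ?_
    rw [← lintegral_const_mul' _ _ ENNReal.ofReal_ne_top, ← lintegral_const_mul' _ _ (by simp)]
    refine lintegral_congr fun z => ?_
    simp only [Pi.mul_apply, wt]
    rw [div_eq_mul_inv (|v z.1 - v z.2| ^ p), ENNReal.ofReal_mul (by positivity)]
    ring

lemma base_ae (N : ℕ) (Ω : Set (EuclideanSpace ℝ (Fin N))) (μ : Measure ℝ) [IsFiniteMeasure μ]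
    (P : EuclideanSpace ℝ (Fin N) → Prop) (h : ∀ᵐ x, P x) :
    ∀ᵐ q ∂(baseM N Ω μ), P q.2.1 ∧ P q.2.2 := by
  have h1 : ∀ᵐ z ∂((volume : Measure (EuclideanSpace ℝ (Fin N))).prod volume), P z.1 ∧ P z.2 := by
    filter_upwards [Measure.quasiMeasurePreserving_fst.ae h, Measure.quasiMeasurePreserving_snd.ae h]
      with z a b using ⟨a, b⟩
  have h2 := ae_restrict_of_ae (s := ((Ωᶜ) ×ˢ (Ωᶜ))ᶜ) h1
  unfold baseM
  exact Measure.quasiMeasurePreserving_snd.ae h2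

theorem statement5 (N : ℕ) (hN : 1 ≤ N)
    (Ω : Set (EuclideanSpace ℝ (Fin N))) (hΩ : IsOpen Ω) (hne : Ω.Nonempty)
    (hbd : Bornology.IsBounded Ω)
    (p : ℝ) (hp : 1 < p)
    (μ : Measure ℝ) [IsFiniteMeasure μ] (hμ : μ ≠ 0)
    (hsupp : μ ((Set.Ioo (0 : ℝ) 1)ᶜ) = 0)
    (g : EuclideanSpace ℝ (Fin N) → ℝ) (hg : Measurable g)
    (u : ℕ → EuclideanSpace ℝ (Fin N) → ℝ) (hu : ∀ n, Measurable (u n))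
    (hfin : ∀ n, energyE N Ω p μ g (u n) < ⊤)
    (hcauchy : ∀ ε : ℝ, 0 < ε → ∃ K : ℕ, ∀ m, K ≤ m → ∀ n, K ≤ n →
      energyE N Ω p μ g (fun x => u m x - u n x) ≤ ENNReal.ofReal ε) :
    ∃ v : EuclideanSpace ℝ (Fin N) → ℝ, Measurable v ∧
      energyE N Ω p μ g v < ⊤ ∧
      Tendsto (fun n => energyE N Ω p μ g (fun x => u n x - v x)) atTop (𝓝 0) := by
  have hw := wt_aemeas N hN Ω μ p hp
  have hE := fun v hv => energyE_eq N hN Ω p hp μ g v hg hv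
  set ν1 := (volume : Measure (EuclideanSpace ℝ (Fin N))).restrict Ω with hν1
  set ν2 := ((volume : Measure (EuclideanSpace ℝ (Fin N))).restrict Ωᶜ).withDensity
    (fun x => ENNReal.ofReal |g x|) with hν2
  set ν3 := (baseM N Ω μ).withDensity (wt N p) with hν3
  have hT : ∀ v : EuclideanSpace ℝ (Fin N) → ℝ, Measurable v →
      Measurable (fun q : ℝ × (EuclideanSpace ℝ (Fin N) × EuclideanSpace ℝ (Fin N)) =>
        v q.2.1 - v q.2.2) := fun v hv => by fun_prop
  have hd : ∀ m n, Measurable (fun x => u m x - u n x) := fun m n => (hu m).sub (hu n)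
  -- subsequence
  choose K hK using fun k : ℕ => hcauchy (((1 / 2 : ℝ) ^ k) ^ p) (by positivity)
  let φ : ℕ → ℕ := fun k => k + ∑ j ∈ Finset.range (k + 1), K j
  have hφ : ∀ k m, k ≤ m → K k ≤ φ m := fun k m hkm => by
    have := Finset.single_le_sum (f := K) (s := Finset.range (m + 1)) (fun i _ => Nat.zero_le _)
      (Finset.mem_range.2 (Nat.lt_succ_of_le hkm))
    exact this.trans (Nat.le_add_left _ _)
  have hφ' : ∀ k, k ≤ φ k := fun k => Nat.le_add_right _ _
  have hsub : ∀ k m n, k ≤ m → k ≤ n → energyE N Ω p μ g (fun x => u (φ m) x - u (φ n) x) ≤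
      ENNReal.ofReal (((1 / 2 : ℝ) ^ k) ^ p) := fun k m n hm hn =>
    hK k _ (hφ k m hm) _ (hφ k n hn)
  -- a.e. convergence in Ω
  have hc1 : ∀ᵐ x ∂ν1, ∃ l : ℝ, Tendsto (fun n => u (φ n) x) atTop (𝓝 l) := by
    refine pInt_ae_conv ν1 p hp (fun n => u (φ n)) (fun n => hu _) fun k m n hm hn => ?_
    refine le_trans ?_ (hsub k m n hm hn)
    rw [hE _ (hd _ _), add_assoc]
    exact le_self_add
  have hc3 : ∀ᵐ q ∂ν3, ∃ l : ℝ, Tendsto (fun n => u (φ n) q.2.1 - u (φ n) q.2.2) atTop (𝓝 l) := by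
    refine pInt_ae_conv ν3 p hp (fun n q => u (φ n) q.2.1 - u (φ n) q.2.2) (fun n => hT _ (hu _))
      fun k m n hm hn => ?_
    refine le_trans ?_ (hsub k m n hm hn)
    rw [hE _ (hd _ _)]
    refine le_trans (le_of_eq ?_) le_add_self
    congr 1
    funext q
    ring
  rw [hν3, ae_withDensity_iff' hw] at hc3
  have hμI : μ.restrict (Set.Ioo (0 : ℝ) 1) ≠ 0 := by
    rw [Ne, Measure.restrict_eq_zero]
    intro h0
    apply hμ
    rw [← Measure.measure_univ_eq_zero, ← nonpos_iff_eq_zero]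
    calc μ univ = μ (Set.Ioo (0 : ℝ) 1 ∪ (Set.Ioo (0 : ℝ) 1)ᶜ) := by rw [union_compl_self]
      _ ≤ _ := measure_union_le _ _
      _ = 0 := by rw [h0, hsupp, add_zero]
  have hc : ∀ᵐ y : EuclideanSpace ℝ (Fin N), ∃ l : ℝ, Tendsto (fun n => u (φ n) y) atTop (𝓝 l) := by
    unfold baseM at hc3
    have h1 := Measure.ae_ae_of_ae_prod hc3
    have : NeBot (ae (μ.restrict (Set.Ioo (0 : ℝ) 1))) := ae_neBot.2 hμI
    obtain ⟨s, hs, hsI⟩ := (h1.and (ae_restrict_mem measurableSet_Ioo)).exists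
    have hQ : Ω ×ˢ (univ : Set (EuclideanSpace ℝ (Fin N))) ⊆ ((Ωᶜ) ×ˢ (Ωᶜ))ᶜ := by
      rintro ⟨a, b⟩ ⟨ha, -⟩ ⟨hb, -⟩
      exact hb ha
    have h2 := ae_restrict_of_ae_restrict_of_subset hQ hs
    rw [← Measure.prod_restrict, Measure.restrict_univ] at h2
    have h3 := Measure.ae_ae_of_ae_prod h2
    have : NeBot (ae ν1) := by
      rw [ae_neBot, hν1, Ne, Measure.restrict_eq_zero]
      exact (hΩ.measure_pos volume hne).ne'
    obtain ⟨x, hx, l, hl⟩ := (h3.and hc1).exists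
    filter_upwards [hx] with y hy
    by_cases hxy : x = y
    · exact ⟨l, hxy ▸ hl⟩
    · have hwne : wt N p (s, (x, y)) ≠ 0 := by
        have h4 := cNsp_pos N hN s p hp hsI
        have h5 : 0 < dist x y := dist_pos.2 hxy
        have h6 : 0 < (dist x y ^ ((N : ℝ) + p * s))⁻¹ := by positivity
        unfold wt
        refine mul_ne_zero (by simp) (mul_ne_zero ?_ ?_)
        · exact (ENNReal.ofReal_pos.2 h4).ne'
        · exact (ENNReal.ofReal_pos.2 h6).ne'
      obtain ⟨l', hl'⟩ := hy hwne
      refine ⟨l - l', (hl.sub hl').congr fun n => ?_⟩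
      simp
  obtain ⟨v, hv, hlim⟩ := measurable_limit_of_tendsto_metrizable_ae
    (fun n => (hu (φ n)).aemeasurable) hc
  -- Fatou
  have key : ∀ ε : ℝ, 0 < ε → ∃ k : ℕ, ∀ n, k ≤ n →
      pInt ν1 p (fun x => u n x - v x) ≤ ENNReal.ofReal ε ∧
      pInt ν2 p (fun x => u n x - v x) ≤ ENNReal.ofReal ε ∧
      pInt ν3 p (fun q => (u n q.2.1 - v q.2.1) - (u n q.2.2 - v q.2.2)) ≤ ENNReal.ofReal ε := by
    intro ε hε
    obtain ⟨k, hk⟩ := hcauchy ε hε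
    refine ⟨k, fun n hn => ?_⟩
    have hev : ∀ᶠ j in atTop, energyE N Ω p μ g (fun x => u n x - u (φ j) x) ≤ ENNReal.ofReal ε := by
      filter_upwards [eventually_ge_atTop k] with j hj
      exact hk n hn _ (hj.trans (hφ' j))
    have hlim' : ∀ᵐ x, Tendsto (fun j => u n x - u (φ j) x) atTop (𝓝 (u n x - v x)) := by
      filter_upwards [hlim] with x hx using tendsto_const_nhds.sub hx
    refine ⟨?_, ?_, ?_⟩
    · refine pInt_fatou ν1 p hp (fun j x => u n x - u (φ j) x) (fun j => hd _ _) _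
        (ae_restrict_of_ae hlim') _ ?_
      filter_upwards [hev] with j hj
      refine le_trans ?_ hj
      rw [hE _ (hd _ _), add_assoc]
      exact le_self_add
    · refine pInt_fatou ν2 p hp (fun j x => u n x - u (φ j) x) (fun j => hd _ _) _
        ((withDensity_absolutelyContinuous _ _).ae_le (ae_restrict_of_ae hlim')) _ ?_
      filter_upwards [hev] with j hj
      refine le_trans ?_ hj
      rw [hE _ (hd _ _)]
      exact le_add_self.trans le_self_add
    · refine pInt_fatou ν3 p hp
        (fun j q => (u n q.2.1 - u (φ j) q.2.1) - (u n q.2.2 - u (φ j) q.2.2))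
        (fun j => hT _ (hd n (φ j))) _
        ((withDensity_absolutelyContinuous _ _).ae_le ?_) _ ?_
      · filter_upwards [base_ae N Ω μ _ hlim'] with q hq using hq.1.sub hq.2
      filter_upwards [hev] with j hj
      refine le_trans ?_ hj
      rw [hE _ (hd _ _)]
      exact le_add_self
  have hdv : ∀ n, Measurable (fun x => u n x - v x) := fun n => (hu n).sub hv
  refine ⟨v, hv, ?_, ?_⟩
  · obtain ⟨k, hk⟩ := key 1 one_pos
    obtain ⟨a1, a2, a3⟩ := hk k le_rfl
    have hf := hfin k
    rw [hE _ (hu k)] at hf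
    obtain ⟨hf12, hf3⟩ := ENNReal.add_lt_top.1 hf
    obtain ⟨hf1, hf2⟩ := ENNReal.add_lt_top.1 hf12
    rw [hE v hv]
    have b1 := pInt_sub_lt_top ν1 p hp _ _ (hu k) hf1 (a1.trans_lt ENNReal.ofReal_lt_top)
    have b2 := pInt_sub_lt_top ν2 p hp _ _ (hu k) hf2 (a2.trans_lt ENNReal.ofReal_lt_top)
    have b3 := pInt_sub_lt_top ν3 p hp _ _ (hT _ (hu k)) hf3 (a3.trans_lt ENNReal.ofReal_lt_top)
    refine ENNReal.add_lt_top.2 ⟨ENNReal.add_lt_top.2 ⟨?_, ?_⟩, ?_⟩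
    · convert b1 using 2; funext x; ring
    · convert b2 using 2; funext x; ring
    · convert b3 using 2; funext x; ring
  · rw [ENNReal.tendsto_atTop_zero]
    intro ε hε
    by_cases hεt : ε = ⊤
    · exact ⟨0, fun n _ => hεt ▸ le_top⟩
    have hεr : 0 < ε.toReal := ENNReal.toReal_pos hε.ne' hεt
    obtain ⟨k, hk⟩ := key (ε.toReal / 3) (by positivity)
    refine ⟨k, fun n hn => ?_⟩
    obtain ⟨a1, a2, a3⟩ := hk n hn
    rw [hE _ (hdv n)]
    refine (add_le_add (add_le_add a1 a2) a3).trans (le_of_eq ?_)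
    rw [← ENNReal.ofReal_add (by positivity) (by positivity),
      ← ENNReal.ofReal_add (by positivity) (by positivity)]
    conv_rhs => rw [← ENNReal.ofReal_toReal hεt]
    congr 1
    ring
end

section
/- Let N ≥ 1 be an integer, let Ω ⊆ ℝ^N be a measurable set, let p ∈ (1, +∞), let μ be a nonnegative finite Borel measure on (0,1), and let u : ℝ^N → ℝ be measurable. Assume that the function (x,y,s) ↦ c_{N,s,p} · 𝒜(u(x) − u(y)) / |x−y|^{N+ps} is integrable on Ω × ℝ^N × (0,1) with respect to dx dy dμ(s). Then ∫_{(0,1)} ∫_Ω ( c_{N,s,p} ∫_{ℝ^N} 𝒜(u(x) − u(y)) / |x−y|^{N+ps} dy ) dx dμ(s) = − ∫_{(0,1)} ∫_{ℝ^N ∖ Ω} ( c_{N,s,p} ∫_Ω 𝒜(u(x) − u(y)) / |x−y|^{N+ps} dy ) dx dμ(s). (The inner integral over ℝ^N is the integral form of the fractional p-Laplacian (−Δ)_p^s u(x), and the inner integral over Ω is the nonlocal normal p-derivative 𝒩_{s,p} u(x).) -/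
open MeasureTheory Set
open scoped ENNReal

/-- The function `𝒜(t) = |t|^{p-2} t` for `t ≠ 0`, and `𝒜(0) = 0`. -/
noncomputable def Afun (p t : ℝ) : ℝ := if t = 0 then 0 else |t| ^ (p - 2) * t

theorem Afun_neg_aux (p t : ℝ) : Afun p (-t) = - Afun p t := by
  unfold Afun
  by_cases h : t = 0 <;> simp [h]

theorem antisymm_aux {E : Type*} [MeasurableSpace E] (ν : Measure E) [SFinite ν]
    (Ω : Set E) (hΩ : MeasurableSet Ω) (F : E → E → ℝ) (hF : ∀ x y, F y x = - F x y)
    (hint : Integrable (fun q : E × E => F q.1 q.2) ((ν.restrict Ω).prod ν)) :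
    ∫ x in Ω, ∫ y, F x y ∂ν ∂ν = - ∫ x in Ωᶜ, ∫ y in Ω, F x y ∂ν ∂ν := by
  have h1 : Integrable (fun q : E × E => F q.1 q.2) ((ν.restrict Ω).prod (ν.restrict Ω)) :=
    hint.mono_measure (Measure.prod_mono le_rfl Measure.restrict_le_self)
  have h2 : Integrable (fun q : E × E => F q.1 q.2) ((ν.restrict Ω).prod (ν.restrict Ωᶜ)) :=
    hint.mono_measure (Measure.prod_mono le_rfl Measure.restrict_le_self)
  have hsplit : ∫ x in Ω, ∫ y, F x y ∂ν ∂ν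
      = ∫ x in Ω, ((∫ y in Ω, F x y ∂ν) + ∫ y in Ωᶜ, F x y ∂ν) ∂ν := by
    apply integral_congr_ae
    filter_upwards [hint.prod_right_ae] with x hx
    exact (integral_add_compl hΩ hx).symm
  rw [hsplit, integral_add h1.integral_prod_left h2.integral_prod_left]
  have h0 : ∫ x in Ω, ∫ y in Ω, F x y ∂ν ∂ν = 0 := by
    have h := integral_integral_swap (f := F) h1
    have h' : ∫ y in Ω, ∫ x in Ω, F x y ∂ν ∂ν = - ∫ x in Ω, ∫ y in Ω, F x y ∂ν ∂ν := by
      rw [← integral_neg]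
      congr 1; funext y
      rw [← integral_neg]
      congr 1; funext x
      exact hF y x
    linarith
  rw [h0, zero_add, integral_integral_swap (f := F) h2, ← integral_neg]
  congr 1; funext y
  rw [← integral_neg]
  congr 1; funext x
  exact hF y x

theorem statement8 (N : ℕ) (hN : 1 ≤ N)
    (Ω : Set (EuclideanSpace ℝ (Fin N))) (hΩ : MeasurableSet Ω)
    (p : ℝ) (hp : 1 < p)
    (μ : Measure ℝ) [IsFiniteMeasure μ]
    (u : EuclideanSpace ℝ (Fin N) → ℝ) (hu : Measurable u)
    (hint : Integrable
      (fun q : (EuclideanSpace ℝ (Fin N) × EuclideanSpace ℝ (Fin N)) × ℝ =>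
        cNsp N q.2 p * (Afun p (u q.1.1 - u q.1.2) / dist q.1.1 q.1.2 ^ ((N : ℝ) + p * q.2)))
      (((volume.restrict Ω).prod (volume : Measure (EuclideanSpace ℝ (Fin N)))).prod
        (μ.restrict (Set.Ioo 0 1)))) :
    (∫ s in Set.Ioo (0 : ℝ) 1,
        (∫ x in Ω,
          cNsp N s p * ∫ y, Afun p (u x - u y) / dist x y ^ ((N : ℝ) + p * s)) ∂μ)
      = - ∫ s in Set.Ioo (0 : ℝ) 1,
          (∫ x in Ωᶜ,
            cNsp N s p * ∫ y in Ω, Afun p (u x - u y) / dist x y ^ ((N : ℝ) + p * s)) ∂μ := by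
  rw [← integral_neg]
  apply integral_congr_ae
  filter_upwards [hint.prod_left_ae] with s hs
  simp only [← integral_const_mul]
  refine antisymm_aux volume Ω hΩ
    (fun x y => cNsp N s p * (Afun p (u x - u y) / dist x y ^ ((N : ℝ) + p * s))) ?_ hs
  intro x y
  rw [dist_comm y x, ← neg_sub (u x) (u y), Afun_neg_aux]
  ring
end

section
/- Let N ≥ 1 be an integer, let Ω ⊆ ℝ^N be a measurable set, let p ∈ (1, +∞), let μ be a nonnegative finite Borel measure on (0,1), and let u, v : ℝ^N → ℝ be measurable. Assume that (i) the function (x,y,s) ↦ c_{N,s,p} · 𝒜(u(x) − u(y)) (v(x) − v(y)) / |x−y|^{N+ps} is integrable on 𝒬 × (0,1) with respect to dx dy dμ(s); (ii) the function (x,y,s) ↦ c_{N,s,p} · 𝒜(u(x) − u(y)) v(x) / |x−y|^{N+ps} is integrable on Ω × ℝ^N × (0,1) and on (ℝ^N ∖ Ω) × Ω × (0,1) with respect to dx dy dμ(s). Then (1/2) ∫_{(0,1)} c_{N,s,p} ∬_𝒬 𝒜(u(x) − u(y)) (v(x) − v(y)) / |x−y|^{N+ps} dx dy dμ(s) = ∫_{(0,1)}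 ∫_Ω v(x) ( c_{N,s,p} ∫_{ℝ^N} 𝒜(u(x) − u(y)) / |x−y|^{N+ps} dy ) dx dμ(s) + ∫_{(0,1)} ∫_{ℝ^N ∖ Ω} v(x) ( c_{N,s,p} ∫_Ω 𝒜(u(x) − u(y)) / |x−y|^{N+ps} dy ) dx dμ(s). -/
open MeasureTheory Set
open scoped ENNReal

theorem statement10 (N : ℕ) (hN : 1 ≤ N)
    (Ω : Set (EuclideanSpace ℝ (Fin N))) (hΩ : MeasurableSet Ω)
    (p : ℝ) (hp : 1 < p)
    (μ : Measure ℝ) [IsFiniteMeasure μ]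
    (u v : EuclideanSpace ℝ (Fin N) → ℝ) (hu : Measurable u) (hv : Measurable v)
    -- (i) integrability on 𝒬 × (0,1)
    (hint1 : Integrable
      (fun q : (EuclideanSpace ℝ (Fin N) × EuclideanSpace ℝ (Fin N)) × ℝ =>
        cNsp N q.2 p *
          (Afun p (u q.1.1 - u q.1.2) * (v q.1.1 - v q.1.2) /
            dist q.1.1 q.1.2 ^ ((N : ℝ) + p * q.2)))
      (((volume.prod volume).restrict (((Ωᶜ) ×ˢ (Ωᶜ))ᶜ)).prod (μ.restrict (Set.Ioo 0 1))))
    -- (ii) integrability on Ω × ℝ^N × (0,1)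
    (hint2 : Integrable
      (fun q : (EuclideanSpace ℝ (Fin N) × EuclideanSpace ℝ (Fin N)) × ℝ =>
        cNsp N q.2 p *
          (Afun p (u q.1.1 - u q.1.2) * v q.1.1 /
            dist q.1.1 q.1.2 ^ ((N : ℝ) + p * q.2)))
      (((volume.restrict Ω).prod (volume : Measure (EuclideanSpace ℝ (Fin N)))).prod
        (μ.restrict (Set.Ioo 0 1))))
    -- (ii) integrability on (ℝ^N ∖ Ω) × Ω × (0,1)
    (hint3 : Integrable
      (fun q : (EuclideanSpace ℝ (Fin N) × EuclideanSpace ℝ (Fin N)) × ℝ =>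
        cNsp N q.2 p *
          (Afun p (u q.1.1 - u q.1.2) * v q.1.1 /
            dist q.1.1 q.1.2 ^ ((N : ℝ) + p * q.2)))
      (((volume.restrict (Ωᶜ)).prod (volume.restrict Ω)).prod (μ.restrict (Set.Ioo 0 1)))) :
    (1 / 2) * (∫ s in Set.Ioo (0 : ℝ) 1,
        cNsp N s p *
          ∫ z in ((Ωᶜ) ×ˢ (Ωᶜ))ᶜ,
            Afun p (u z.1 - u z.2) * (v z.1 - v z.2) / dist z.1 z.2 ^ ((N : ℝ) + p * s)
            ∂(volume.prod volume) ∂μ)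
      = (∫ s in Set.Ioo (0 : ℝ) 1,
          (∫ x in Ω,
            v x * (cNsp N s p *
              ∫ y, Afun p (u x - u y) / dist x y ^ ((N : ℝ) + p * s))) ∂μ)
        + ∫ s in Set.Ioo (0 : ℝ) 1,
            (∫ x in Ωᶜ,
              v x * (cNsp N s p *
                ∫ y in Ω, Afun p (u x - u y) / dist x y ^ ((N : ℝ) + p * s))) ∂μ := by
  classical
  set Q : Set (EuclideanSpace ℝ (Fin N) × EuclideanSpace ℝ (Fin N)) := ((Ωᶜ) ×ˢ (Ωᶜ))ᶜ with hQ
  let F : ℝ → EuclideanSpace ℝ (Fin N) × EuclideanSpace ℝ (Fin N) → ℝ := fun s z =>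
    cNsp N s p * (Afun p (u z.1 - u z.2) * v z.1 / dist z.1 z.2 ^ ((N : ℝ) + p * s))
  have hQu : Q = (Ω ×ˢ univ) ∪ (Ωᶜ ×ˢ Ω) := by
    ext z
    simp only [hQ, mem_compl_iff, mem_prod, mem_union, mem_univ]
    tauto
  have hdisj : Disjoint (Ω ×ˢ (univ : Set (EuclideanSpace ℝ (Fin N)))) (Ωᶜ ×ˢ Ω) := by
    rw [Set.disjoint_left]
    rintro z hz hz2
    exact hz2.1 hz.1
  have hQm : MeasurableSet Q := (hΩ.compl.prod hΩ.compl).compl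
  have hA := hint2.prod_left_ae
  have hB := hint3.prod_left_ae
  have key : ∀ᵐ s ∂(μ.restrict (Set.Ioo 0 1)),
      (1 / 2) * (cNsp N s p *
          ∫ z in Q,
            Afun p (u z.1 - u z.2) * (v z.1 - v z.2) / dist z.1 z.2 ^ ((N : ℝ) + p * s)
            ∂(volume.prod volume)) =
        (∫ z, F s z ∂((volume.restrict Ω).prod volume)) +
        ∫ z, F s z ∂((volume.restrict Ωᶜ).prod (volume.restrict Ω)) := by
    filter_upwards [hA, hB] with s h2 h3
    have h2' : IntegrableOn (F s) (Ω ×ˢ univ) (volume.prod volume) := by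
      rw [IntegrableOn, ← Measure.prod_restrict, Measure.restrict_univ]
      exact h2
    have h3' : IntegrableOn (F s) (Ωᶜ ×ˢ Ω) (volume.prod volume) := by
      rw [IntegrableOn, ← Measure.prod_restrict]
      exact h3
    have hF : IntegrableOn (F s) Q (volume.prod volume) := by
      rw [hQu]; exact h2'.union h3'
    have hpre : Prod.swap ⁻¹' Q = Q := by
      ext z
      simp only [hQ, mem_preimage, mem_compl_iff, mem_prod, Prod.fst_swap, Prod.snd_swap]
      tauto
    have hmp : MeasurePreserving (Prod.swap : EuclideanSpace ℝ (Fin N) × EuclideanSpace ℝ (Fin N) → _)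
        ((volume.prod volume).restrict Q) ((volume.prod volume).restrict Q) := by
      have h := (Measure.measurePreserving_swap
        (μ := (volume : Measure (EuclideanSpace ℝ (Fin N))))
        (ν := (volume : Measure (EuclideanSpace ℝ (Fin N))))).restrict_preimage hQm
      rwa [hpre] at h
    have hemb : MeasurableEmbedding
        (Prod.swap : EuclideanSpace ℝ (Fin N) × EuclideanSpace ℝ (Fin N) → _) :=
      MeasurableEquiv.prodComm.measurableEmbedding
    have hFs : IntegrableOn (fun z => F s z.swap) Q (volume.prod volume) :=
      (hmp.integrable_comp_emb hemb).2 hF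
    have hFse : ∫ z in Q, F s z.swap ∂(volume.prod volume) = ∫ z in Q, F s z ∂(volume.prod volume) :=
      hmp.integral_comp hemb (F s)
    have hG : cNsp N s p * ∫ z in Q,
            Afun p (u z.1 - u z.2) * (v z.1 - v z.2) / dist z.1 z.2 ^ ((N : ℝ) + p * s)
            ∂(volume.prod volume) = ∫ z in Q, (F s z + F s z.swap) ∂(volume.prod volume) := by
      rw [← integral_const_mul]
      congr 1
      funext z
      simp only [F, Prod.fst_swap, Prod.snd_swap]
      rw [← neg_sub (u z.1) (u z.2), Afun_neg_aux, dist_comm z.2 z.1]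
      ring
    rw [hG, integral_add hF hFs, hFse, hQu, setIntegral_union hdisj (hΩ.compl.prod hΩ) h2' h3',
      ← Measure.prod_restrict, ← Measure.prod_restrict, Measure.restrict_univ]
    ring
  have e1 : ∀ᵐ s ∂(μ.restrict (Set.Ioo 0 1)),
      (∫ x in Ω, v x * (cNsp N s p *
              ∫ y, Afun p (u x - u y) / dist x y ^ ((N : ℝ) + p * s))) =
      ∫ z, F s z ∂((volume.restrict Ω).prod volume) := by
    filter_upwards [hA] with s h2
    rw [integral_prod (F s) h2]
    congr 1
    funext x
    rw [← integral_const_mul, ← integral_const_mul]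
    congr 1
    funext y
    simp only [F]
    ring
  have e2 : ∀ᵐ s ∂(μ.restrict (Set.Ioo 0 1)),
      (∫ x in Ωᶜ, v x * (cNsp N s p *
              ∫ y in Ω, Afun p (u x - u y) / dist x y ^ ((N : ℝ) + p * s))) =
      ∫ z, F s z ∂((volume.restrict Ωᶜ).prod (volume.restrict Ω)) := by
    filter_upwards [hB] with s h3
    rw [integral_prod (F s) h3]
    congr 1
    funext x
    rw [← integral_const_mul, ← integral_const_mul]
    congr 1
    funext y
    simp only [F]
    ring
  have i1 : Integrable (fun s => ∫ z, F s z ∂((volume.restrict Ω).prod volume))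
      (μ.restrict (Set.Ioo 0 1)) := hint2.integral_prod_right
  have i2 : Integrable (fun s => ∫ z, F s z ∂((volume.restrict Ωᶜ).prod (volume.restrict Ω)))
      (μ.restrict (Set.Ioo 0 1)) := hint3.integral_prod_right
  rw [integral_congr_ae e1, integral_congr_ae e2, ← integral_add i1 i2, ← integral_const_mul]
  exact integral_congr_ae key
end

section
/- Let p ≥ 2. There exists a constant C > 0, depending only on p, such that the following holds. Let (X, ν) be a measure space, let d ≥ 1, and let f, g : X → ℝ^d be measurable. Then ∫_X |f − g|^p dν ≤ C · ∫_X ( |f|^{p−2} f − |g|^{p−2} g ) · ( f − g ) dν, where the integrand on the right-hand side is nonnegative and both sides are interpreted as integrals of nonnegative functions with values in [0, +∞]. -/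
open MeasureTheory
open scoped ENNReal RealInnerProductSpace

theorem pointwise_aux {E : Type*} [NormedAddCommGroup E] [InnerProductSpace ℝ E]
    (p : ℝ) (hp : 2 ≤ p) (a b : E) :
    ‖a - b‖ ^ p ≤ (2 * 2 ^ (p - 2)) *
      ⟪‖a‖ ^ (p - 2) • a - ‖b‖ ^ (p - 2) • b, a - b⟫ := by
  have hq : 0 ≤ p - 2 := by linarith
  have h1 : ‖a - b‖ ^ p = ‖a - b‖ ^ (p - 2) * ‖a - b‖ ^ 2 := by
    rw [← Real.rpow_natCast, ← Real.rpow_add_of_nonneg (norm_nonneg _) hq (by norm_num)]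
    congr 1
    push_cast
    ring
  have hA : 0 ≤ ‖a‖ ^ (p - 2) := by positivity
  have hB : 0 ≤ ‖b‖ ^ (p - 2) := by positivity
  have hn : ‖a - b‖ ≤ ‖a‖ + ‖b‖ := norm_sub_le a b
  have h2 : ‖a - b‖ ^ (p - 2) ≤ 2 ^ (p - 2) * (‖a‖ ^ (p - 2) + ‖b‖ ^ (p - 2)) := by
    have h20 : (0 : ℝ) ≤ 2 ^ (p - 2) := by positivity
    rcases le_total ‖a‖ ‖b‖ with h | h
    · have := Real.rpow_le_rpow (norm_nonneg (a - b)) (show ‖a - b‖ ≤ 2 * ‖b‖ by linarith) hq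
      rw [Real.mul_rpow (by norm_num) (norm_nonneg _)] at this
      nlinarith [mul_nonneg h20 hA]
    · have := Real.rpow_le_rpow (norm_nonneg (a - b)) (show ‖a - b‖ ≤ 2 * ‖a‖ by linarith) hq
      rw [Real.mul_rpow (by norm_num) (norm_nonneg _)] at this
      nlinarith [mul_nonneg h20 hB]
  have h3 : 0 ≤ (‖a‖ ^ (p - 2) - ‖b‖ ^ (p - 2)) * (‖a‖ ^ 2 - ‖b‖ ^ 2) := by
    rcases le_total ‖a‖ ‖b‖ with h | h
    · exact mul_nonneg_of_nonpos_of_nonpos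
        (sub_nonpos.2 (Real.rpow_le_rpow (norm_nonneg _) h hq))
        (sub_nonpos.2 (pow_le_pow_left₀ (norm_nonneg _) h 2))
    · exact mul_nonneg
        (sub_nonneg.2 (Real.rpow_le_rpow (norm_nonneg _) h hq))
        (sub_nonneg.2 (pow_le_pow_left₀ (norm_nonneg _) h 2))
  have h4 : 2 * ⟪‖a‖ ^ (p - 2) • a - ‖b‖ ^ (p - 2) • b, a - b⟫
      = (‖a‖ ^ (p - 2) + ‖b‖ ^ (p - 2)) * ‖a - b‖ ^ 2
        + (‖a‖ ^ (p - 2) - ‖b‖ ^ (p - 2)) * (‖a‖ ^ 2 - ‖b‖ ^ 2) := by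
    rw [norm_sub_sq_real]
    simp only [inner_sub_left, inner_sub_right, real_inner_smul_left,
      real_inner_self_eq_norm_sq, real_inner_comm a b]
    ring
  calc ‖a - b‖ ^ p = ‖a - b‖ ^ (p - 2) * ‖a - b‖ ^ 2 := h1
    _ ≤ 2 ^ (p - 2) * (‖a‖ ^ (p - 2) + ‖b‖ ^ (p - 2)) * ‖a - b‖ ^ 2 := by gcongr
    _ = 2 ^ (p - 2) * ((‖a‖ ^ (p - 2) + ‖b‖ ^ (p - 2)) * ‖a - b‖ ^ 2) := by ring
    _ ≤ 2 ^ (p - 2) * (2 * ⟪‖a‖ ^ (p - 2) • a - ‖b‖ ^ (p - 2) • b, a - b⟫) := by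
        refine mul_le_mul_of_nonneg_left ?_ (by positivity)
        linarith
    _ = _ := by ring

theorem statement12 (p : ℝ) (hp : 2 ≤ p) :
    ∃ C : ℝ, 0 < C ∧
      ∀ (X : Type) (_ : MeasurableSpace X) (ν : Measure X) (d : ℕ), 1 ≤ d →
        ∀ f g : X → EuclideanSpace ℝ (Fin d), Measurable f → Measurable g →
          (∫⁻ x, ENNReal.ofReal (‖f x - g x‖ ^ p) ∂ν)
            ≤ ENNReal.ofReal C *
                ∫⁻ x, ENNReal.ofReal
                  ⟪‖f x‖ ^ (p - 2) • f x - ‖g x‖ ^ (p - 2) • g x, f x - g x⟫ ∂ν := by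
  refine ⟨2 * 2 ^ (p - 2), by positivity, ?_⟩
  intro X _ ν d _ f g _ _
  rw [← lintegral_const_mul' _ _ ENNReal.ofReal_ne_top]
  refine lintegral_mono fun x => ?_
  rw [← ENNReal.ofReal_mul (by positivity)]
  exact ENNReal.ofReal_le_ofReal (pointwise_aux p hp (f x) (g x))
end

section
/- Let 1 < p < 2. There exists a constant C > 0, depending only on p, such that the following holds. Let (X, ν) be a measure space, let d ≥ 1, and let f, g : X → ℝ^d be measurable with ∫_X ( |f|^p + |g|^p ) dν < +∞. Then ∫_X |f − g|^p dν ≤ C · ( ∫_X ( |f|^{p−2} f − |g|^{p−2} g ) · ( f − g ) dν )^{p/2} · ( ∫_X ( |f|^p + |g|^p ) dν )^{(2−p)/2}, where the integrand (|f|^{p−2} f − |g|^{p−2} g)·(f − g) is nonnegative and its integral is interpreted with values in [0, +∞]. -/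
open MeasureTheory
open scoped ENNReal RealInnerProductSpace

theorem key_aux {E : Type*} [NormedAddCommGroup E] [InnerProductSpace ℝ E]
    (p : ℝ) (hp1 : 1 < p) (hp2 : p < 2) (a b : E) (hab : ‖b‖ ≤ ‖a‖) (ha : 0 < ‖a‖) :
    (p - 1) * (‖a‖ ^ (p - 2) * ‖a - b‖ ^ 2)
      ≤ ⟪‖a‖ ^ (p - 2) • a - ‖b‖ ^ (p - 2) • b, a - b⟫ := by
  have hI : ⟪‖a‖ ^ (p - 2) • a - ‖b‖ ^ (p - 2) • b, a - b⟫ =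
      ‖a‖ ^ (p - 2) * ‖a‖ ^ 2 + ‖b‖ ^ (p - 2) * ‖b‖ ^ 2
        - (‖a‖ ^ (p - 2) + ‖b‖ ^ (p - 2)) * ⟪a, b⟫ := by
    simp only [inner_sub_left, inner_sub_right, real_inner_smul_left,
      real_inner_self_eq_norm_sq, real_inner_comm a b]
    ring
  have hu : 0 < ‖a‖ ^ (p - 2) := Real.rpow_pos_of_pos ha _
  rw [hI, norm_sub_sq_real]
  rcases (norm_nonneg b).eq_or_lt with hb | hb
  · have hb0 : b = 0 := norm_eq_zero.1 hb.symm
    subst hb0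
    have h1 : 0 < ‖a‖ ^ (p - 2) * ‖a‖ ^ 2 := by positivity
    simp only [norm_zero, inner_zero_right]
    nlinarith
  · have hk : ⟪a, b⟫ ≤ ‖a‖ * ‖b‖ := real_inner_le_norm a b
    have huv : ‖a‖ ^ (p - 2) ≤ ‖b‖ ^ (p - 2) :=
      Real.rpow_le_rpow_of_nonpos hb hab (by linarith)
    have hs : ‖a‖ ^ (p - 1) = ‖a‖ ^ (p - 2) * ‖a‖ := by
      rw [← Real.rpow_add_one ha.ne']; congr 1; ring
    have ht : ‖b‖ ^ (p - 1) = ‖b‖ ^ (p - 2) * ‖b‖ := by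
      rw [← Real.rpow_add_one hb.ne']; congr 1; ring
    have hB : (‖b‖ / ‖a‖) ^ (p - 1) ≤ 1 + (p - 1) * (‖b‖ / ‖a‖ - 1) := by
      have h0 : 0 ≤ ‖b‖ / ‖a‖ := by positivity
      have := rpow_one_add_le_one_add_mul_self (s := ‖b‖ / ‖a‖ - 1) (by linarith)
        (p := p - 1) (by linarith) (by linarith)
      simpa using this
    rw [Real.div_rpow hb.le ha.le, hs, ht, div_le_iff₀ (by positivity)] at hB
    have hB2 : (1 + (p - 1) * (‖b‖ / ‖a‖ - 1)) * (‖a‖ ^ (p - 2) * ‖a‖) =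
        ‖a‖ ^ (p - 2) * ‖a‖ + (p - 1) * ‖a‖ ^ (p - 2) * (‖b‖ - ‖a‖) := by
      field_simp
    rw [hB2] at hB
    generalize ‖a‖ ^ (p - 2) = u at *
    generalize ‖b‖ ^ (p - 2) = v at *
    generalize ⟪a, b⟫ = k at *
    have h1 : 0 ≤ (u + v - 2 * (p - 1) * u) * (‖a‖ * ‖b‖ - k) :=
      mul_nonneg (by nlinarith) (by linarith)
    have h2 := mul_le_mul_of_nonneg_right hB (sub_nonneg.2 hab)
    nlinarith

theorem key_max {E : Type*} [NormedAddCommGroup E] [InnerProductSpace ℝ E]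
    (p : ℝ) (hp1 : 1 < p) (hp2 : p < 2) (a b : E) :
    ‖a - b‖ ^ p ≤ (p - 1)⁻¹ ^ (p / 2) *
      ⟪‖a‖ ^ (p - 2) • a - ‖b‖ ^ (p - 2) • b, a - b⟫ ^ (p / 2) *
      (‖a‖ ^ p + ‖b‖ ^ p) ^ ((2 - p) / 2) ∧
      0 ≤ ⟪‖a‖ ^ (p - 2) • a - ‖b‖ ^ (p - 2) • b, a - b⟫ := by
  wlog hab : ‖b‖ ≤ ‖a‖ generalizing a b
  · have := this b a (le_of_not_ge hab)
    rw [norm_sub_rev, add_comm (‖a‖ ^ p), ← inner_neg_neg, neg_sub, neg_sub]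
    exact this
  rcases (norm_nonneg a).eq_or_lt with ha | ha
  · have ha0 : a = 0 := norm_eq_zero.1 ha.symm
    subst ha0
    have hb0 : b = 0 := by simpa using hab
    subst hb0
    have : p ≠ 0 := by linarith
    have h2 : p / 2 ≠ 0 := by positivity
    simp [Real.zero_rpow this, Real.zero_rpow h2]
  have h := key_aux p hp1 hp2 a b hab ha
  have hp : 0 < p - 1 := by linarith
  have hu : 0 < ‖a‖ ^ (p - 2) := Real.rpow_pos_of_pos ha _
  have hI : 0 ≤ ⟪‖a‖ ^ (p - 2) • a - ‖b‖ ^ (p - 2) • b, a - b⟫ := le_trans (by positivity) h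
  refine ⟨?_, hI⟩
  generalize ⟪‖a‖ ^ (p - 2) • a - ‖b‖ ^ (p - 2) • b, a - b⟫ = I at *
  have hM : 0 < ‖a‖ ^ (2 - p) := Real.rpow_pos_of_pos ha _
  have hinv : ‖a‖ ^ (p - 2) * ‖a‖ ^ (2 - p) = 1 := by
    rw [← Real.rpow_add ha]; simp
  have h3 : ‖a - b‖ ^ 2 ≤ (p - 1)⁻¹ * I * ‖a‖ ^ (2 - p) := by
    have h4 := mul_le_mul_of_nonneg_right h hM.le
    have h5 : (p - 1) * ‖a - b‖ ^ 2 ≤ I * ‖a‖ ^ (2 - p) := by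
      calc (p - 1) * ‖a - b‖ ^ 2
          = (p - 1) * ‖a - b‖ ^ 2 * (‖a‖ ^ (p - 2) * ‖a‖ ^ (2 - p)) := by rw [hinv, mul_one]
        _ ≤ _ := by linarith
    rw [mul_assoc, ← div_eq_inv_mul, le_div_iff₀ hp]
    linarith
  have h6 : ‖a - b‖ ^ p = (‖a - b‖ ^ 2) ^ (p / 2) := by
    rw [← Real.rpow_natCast, ← Real.rpow_mul (norm_nonneg _)]; congr 1; push_cast; ring
  have h7 : (‖a‖ ^ (2 - p)) ^ (p / 2) = (‖a‖ ^ p) ^ ((2 - p) / 2) := by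
    rw [← Real.rpow_mul ha.le, ← Real.rpow_mul ha.le]; congr 1; ring
  rw [h6]
  calc _ ≤ ((p - 1)⁻¹ * I * ‖a‖ ^ (2 - p)) ^ (p / 2) :=
        Real.rpow_le_rpow (by positivity) h3 (by linarith)
    _ = (p - 1)⁻¹ ^ (p / 2) * I ^ (p / 2) * (‖a‖ ^ p) ^ ((2 - p) / 2) := by
        rw [Real.mul_rpow (by positivity) hM.le, Real.mul_rpow (by positivity) hI, h7]
    _ ≤ _ := by
        refine mul_le_mul_of_nonneg_left (Real.rpow_le_rpow (by positivity) ?_ (by linarith))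
          (by positivity)
        have : 0 ≤ ‖b‖ ^ p := by positivity
        linarith

theorem statement13 (p : ℝ) (hp1 : 1 < p) (hp2 : p < 2) :
    ∃ C : ℝ, 0 < C ∧
      ∀ (X : Type) (_ : MeasurableSpace X) (ν : Measure X) (d : ℕ), 1 ≤ d →
        ∀ f g : X → EuclideanSpace ℝ (Fin d), Measurable f → Measurable g →
          (∫⁻ x, ENNReal.ofReal (‖f x‖ ^ p + ‖g x‖ ^ p) ∂ν) < ⊤ →
          (∫⁻ x, ENNReal.ofReal (‖f x - g x‖ ^ p) ∂ν)
            ≤ ENNReal.ofReal C *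
                (∫⁻ x, ENNReal.ofReal
                  ⟪‖f x‖ ^ (p - 2) • f x - ‖g x‖ ^ (p - 2) • g x, f x - g x⟫ ∂ν) ^ (p / 2) *
                (∫⁻ x, ENNReal.ofReal (‖f x‖ ^ p + ‖g x‖ ^ p) ∂ν) ^ ((2 - p) / 2) := by
  have hp : 0 < p - 1 := by linarith
  refine ⟨(p - 1)⁻¹ ^ (p / 2), by positivity, ?_⟩
  intro X _ ν d _ f g hf hg _
  have hmI : Measurable fun x => ENNReal.ofReal
      ⟪‖f x‖ ^ (p - 2) • f x - ‖g x‖ ^ (p - 2) • g x, f x - g x⟫ := by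
    apply Measurable.ennreal_ofReal
    apply Measurable.inner
    · exact ((hf.norm.pow_const _).smul hf).sub ((hg.norm.pow_const _).smul hg)
    · exact hf.sub hg
  have hmG : Measurable fun x => ENNReal.ofReal (‖f x‖ ^ p + ‖g x‖ ^ p) :=
    ((hf.norm.pow_const _).add (hg.norm.pow_const _)).ennreal_ofReal
  have hH := ENNReal.lintegral_mul_norm_pow_le (μ := ν) hmI.aemeasurable hmG.aemeasurable
    (p := p / 2) (q := (2 - p) / 2) (by linarith) (by linarith) (by ring)
  rw [mul_assoc]
  refine le_trans ?_ (mul_le_mul_right hH _)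
  rw [← lintegral_const_mul' _ _ ENNReal.ofReal_ne_top]
  refine lintegral_mono fun x => ?_
  obtain ⟨h1, h2⟩ := key_max p hp1 hp2 (f x) (g x)
  refine (ENNReal.ofReal_le_ofReal h1).trans (le_of_eq ?_)
  rw [ENNReal.ofReal_mul (by positivity), ENNReal.ofReal_mul (by positivity), mul_assoc,
    ENNReal.ofReal_rpow_of_nonneg h2 (by linarith),
    ENNReal.ofReal_rpow_of_nonneg (by positivity) (by linarith)]
end
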